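/- arXiv:1306.5880 — 3 statements merged into one kernel-verified Lean document; each statement's English description precedes it below -/
import Mathlib

section
/- Let 0 < α < 1/2 and 0 < β < 1/2 with τ(C_α)·τ(C_β) < 1. If log α / log β is irrational, then C_α + C_β ≠ [0, 2]. -/
/-!
Suppose `C_α + C_β = [0, 2]`, and look at it near `0`, at a scale where the pieces `α ^ n C_α` and
`β ^ m C_β` at the left ends of the two sets are comparable. The midpoint `z = (α ^ n + β ^ m) / 2`
of the hull of their sum must be `x + y` with `x ∈ C_α` and `y ∈ C_β`. Put `t = β ^ m / α ^ n`.

* If `t < (2 - 3 * α) / α`, then `z` lies below the right end of the gap of `C_α` that follows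
  `[0, α ^ n]`, so `x ≤ α ^ n`.
* If `t > 1 / (1 - 2 * β)`, then `z` lies below the right end of the gap of `C_β` that follows
  `[0, β ^ (m + 1)]`, so `y ≤ β ^ (m + 1)`; but also `z > α ^ n + β ^ (m + 1)`, a contradiction.

Both inequalities hold for `t` in an open interval which is nonempty exactly when
`τ(C_α) τ(C_β) < 1`, and the ratios `β ^ m / α ^ n` are dense in `(0, ∞)` because an irrational
rotation of the circle has dense forward orbits.
-/

open Set MeasureTheory

/-- The middle Cantor set `C_a`, for `0 < a < 1/2`:
`C_a = { (1-a) * ∑ εₖ aᵏ : εₖ ∈ {0,1} }`. -/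
noncomputable def middleCantor (a : ℝ) : Set ℝ :=
  {x : ℝ | ∃ ε : ℕ → Bool, x = (1 - a) * ∑' k : ℕ, (if ε k then a ^ k else 0)}

/-- The arithmetic difference `C_a - l · C_b`. -/
noncomputable def diffSet (a b l : ℝ) : Set ℝ :=
  {z : ℝ | ∃ x ∈ middleCantor a, ∃ y ∈ middleCantor b, z = x - l * y}


/-- The arithmetic sum `C_a + C_b`. -/
noncomputable def sumSet (a b : ℝ) : Set ℝ :=
  {z : ℝ | ∃ x ∈ middleCantor a, ∃ y ∈ middleCantor b, z = x + y}

section MiddleCantor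

variable {a x : ℝ}

lemma summable_middleCantor_digits (ha : |a| < 1) (ε : ℕ → Bool) :
    Summable fun k : ℕ => if ε k then a ^ k else 0 := by
  refine (summable_geometric_of_abs_lt_one ha).indicator {k | ε k} |>.congr fun k => ?_
  simp only [indicator_apply, mem_ofPred_eq]

lemma exists_eq_mul_or_eq_mul_add_of_mem_middleCantor (ha : |a| < 1) (hx : x ∈ middleCantor a) :
    ∃ y ∈ middleCantor a, x = a * y ∨ x = a * y + (1 - a) := by
  obtain ⟨ε, rfl⟩ := hx
  have hshift : ∑' k, (if ε (k + 1) then a ^ (k + 1) else 0)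
      = a * ∑' k, (if ε (k + 1) then a ^ k else 0) := by
    simp only [← tsum_mul_left, mul_ite, mul_zero, pow_succ']
  refine ⟨_, ⟨fun k => ε (k + 1), rfl⟩, ?_⟩
  rw [(summable_middleCantor_digits ha ε).tsum_eq_zero_add, hshift]
  cases ε 0
  · left
    simp only [Bool.false_eq_true, if_false]
    ring
  · right
    simp only [if_true]
    ring

lemma middleCantor_subset_Icc (ha₀ : 0 ≤ a) (ha₁ : a < 1) : middleCantor a ⊆ Icc 0 1 := by
  rintro _ ⟨ε, rfl⟩
  have ha : |a| < 1 := by rwa [abs_of_nonneg ha₀]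
  have ha' : 0 < 1 - a := sub_pos.2 ha₁
  refine ⟨mul_nonneg ha'.le (tsum_nonneg fun k => by split_ifs <;> positivity), ?_⟩
  have hle (k : ℕ) : (if ε k then a ^ k else 0) ≤ a ^ k := by
    split_ifs
    · exact le_rfl
    · exact pow_nonneg ha₀ k
  calc (1 - a) * ∑' k, (if ε k then a ^ k else 0)
      ≤ (1 - a) * ∑' k, a ^ k := by
        refine mul_le_mul_of_nonneg_left ?_ ha'.le
        exact (summable_middleCantor_digits ha ε).tsum_le_tsum hle
          (summable_geometric_of_abs_lt_one ha)
    _ = 1 := by rw [tsum_geometric_of_abs_lt_one ha, mul_inv_cancel₀ ha'.ne']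

/-- For `n ≥ 1` the hypothesis `hxn` places `x` below the right end `(1 - a) * a ^ (n - 1)` of the
gap following `a ^ n`; it is multiplied by `a` to make sense for `n = 0` too. -/
lemma le_pow_of_mem_middleCantor (ha₀ : 0 < a) (ha₁ : a < 1) (hx : x ∈ middleCantor a) {n : ℕ}
    (hxn : a * x < (1 - a) * a ^ n) : x ≤ a ^ n := by
  induction n generalizing x with
  | zero => simpa using (middleCantor_subset_Icc ha₀.le ha₁ hx).2
  | succ n ih =>
    have hxn' : x < (1 - a) * a ^ n := by
      rw [pow_succ', mul_left_comm] at hxn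
      exact lt_of_mul_lt_mul_left hxn ha₀.le
    have ha : |a| < 1 := by rwa [abs_of_pos ha₀]
    obtain ⟨y, hy, rfl | rfl⟩ := exists_eq_mul_or_eq_mul_add_of_mem_middleCantor ha hx
    · rw [pow_succ']
      exact mul_le_mul_of_nonneg_left (ih hy hxn') ha₀.le
    · have hy₀ : 0 ≤ a * y := mul_nonneg ha₀.le (middleCantor_subset_Icc ha₀.le ha₁ hy).1
      have hpow : (1 - a) * a ^ n ≤ 1 - a :=
        mul_le_of_le_one_right (sub_pos.2 ha₁).le (pow_le_one₀ ha₀.le ha₁.le)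
      linarith

end MiddleCantor

section Density

variable {u v : ℝ}

lemma denseRange_nat_mul_sub_int_mul (hv : 0 < v) (hirr : Irrational (u / v)) :
    DenseRange fun p : ℕ × ℤ => p.1 * u - p.2 * v := by
  have : Fact (0 < v) := ⟨hv⟩
  have hdense : DenseRange (· • (u : AddCircle v) : ℕ → AddCircle v) :=
    denseRange_zsmul_iff_nsmul.1 (AddCircle.denseRange_zsmul_coe_iff.2 hirr)
  refine (QuotientAddGroup.dense_preimage_mk.2 hdense).mono ?_
  rintro x ⟨n, hn⟩
  have hsub : ((n * u - x : ℝ) : AddCircle v) = 0 := by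
    rw [AddCircle.coe_sub, ← nsmul_eq_mul, AddCircle.coe_nsmul]
    exact sub_eq_zero.2 hn
  obtain ⟨m, hm⟩ := AddCircle.coe_eq_zero_iff v |>.1 hsub
  rw [zsmul_eq_mul] at hm
  exact ⟨(n, m), by linarith⟩

lemma denseRange_nat_mul_sub_nat_mul (hu : 0 < u) (hv : 0 < v) (hirr : Irrational (u / v)) :
    DenseRange fun p : ℕ × ℕ => p.1 * u - p.2 * v := by
  refine dense_of_exists_between fun {r s} hrs => ?_
  -- Aiming at `(r - N * u, s - N * u)`, which lies in the negative reals, forces `m ≥ 0`.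
  obtain ⟨N, hN⟩ := exists_nat_ge (s / u)
  have hNs : s ≤ N * u := (div_le_iff₀ hu).1 hN
  obtain ⟨_, ⟨⟨n, m⟩, rfl⟩, hr, hs⟩ :=
    (denseRange_nat_mul_sub_int_mul hv hirr).exists_between (sub_lt_sub_right hrs (N * u))
  dsimp only at hr hs
  have hm : 0 ≤ m := by
    have hnu : 0 ≤ n * u := by positivity
    have hmv : 0 < m * v := by linarith
    exact_mod_cast (pos_of_mul_pos_left hmv hv.le).le
  lift m to ℕ using hm
  refine ⟨_, ⟨(n + N, m), rfl⟩, ?_, ?_⟩ <;> push_cast at hr hs ⊢ <;> linarith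

lemma exists_pow_div_pow_mem_Ioo {a b r s : ℝ} (ha₀ : 0 < a) (ha₁ : a < 1) (hb₀ : 0 < b)
    (hb₁ : b < 1) (hirr : Irrational (Real.log a / Real.log b)) (hr : 0 < r) (hrs : r < s) :
    ∃ n m : ℕ, b ^ m / a ^ n ∈ Ioo r s := by
  have hdense : DenseRange fun p : ℕ × ℕ => p.1 * -Real.log a - p.2 * -Real.log b :=
    denseRange_nat_mul_sub_nat_mul (neg_pos.2 (Real.log_neg ha₀ ha₁))
      (neg_pos.2 (Real.log_neg hb₀ hb₁)) (by rwa [neg_div_neg_eq])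
  obtain ⟨_, ⟨⟨n, m⟩, rfl⟩, hlo, hhi⟩ := hdense.exists_between (Real.log_lt_log hr hrs)
  have hlog : n * -Real.log a - m * -Real.log b = Real.log (b ^ m / a ^ n) := by
    rw [Real.log_div (by positivity) (by positivity), Real.log_pow, Real.log_pow]
    ring
  simp only [hlog] at hlo hhi
  have hpos : 0 < b ^ m / a ^ n := by positivity
  exact ⟨n, m, (Real.log_lt_log_iff hr hpos).1 hlo,
    (Real.log_lt_log_iff hpos (hr.trans hrs)).1 hhi⟩

end Density

section SumSet

variable {a b : ℝ}

lemma thickness_mul_thickness_lt_one_iff (ha₀ : 0 < a) (ha : a < 1 / 2) (hb : b < 1 / 2) :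
    a / (1 - 2 * a) * (b / (1 - 2 * b)) < 1 ↔ 1 / (1 - 2 * b) < (2 - 3 * a) / a := by
  have ha' : 0 < 1 - 2 * a := by linarith
  have hb' : 0 < 1 - 2 * b := by linarith
  rw [div_mul_div_comm, div_lt_one (mul_pos ha' hb'), div_lt_div_iff₀ hb' ha₀]
  constructor <;> intro h <;> linarith

lemma add_pow_div_two_notMem_sumSet (ha₀ : 0 < a) (ha₁ : a < 1) (hb₀ : 0 < b) (hb : b < 1 / 2)
    {n m : ℕ} (h : b ^ m / a ^ n ∈ Ioo (1 / (1 - 2 * b)) ((2 - 3 * a) / a)) :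
    (a ^ n + b ^ m) / 2 ∉ sumSet a b := by
  rintro ⟨x, hx, y, hy, hxy⟩
  have hb₁ : b < 1 := by linarith
  have han : 0 < a ^ n := pow_pos ha₀ n
  have hlo : a ^ n < (1 - 2 * b) * b ^ m := by
    have := (div_lt_div_iff₀ (by linarith) han).1 h.1
    linarith
  have hhi : a * b ^ m < (2 - 3 * a) * a ^ n := by
    have := (div_lt_div_iff₀ han ha₀).1 h.2
    linarith
  have hx₀ : 0 ≤ x := (middleCantor_subset_Icc ha₀.le ha₁ hx).1
  have hy₀ : 0 ≤ y := (middleCantor_subset_Icc hb₀.le hb₁ hy).1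
  have hxn : x ≤ a ^ n := by
    refine le_pow_of_mem_middleCantor ha₀ ha₁ hx ?_
    calc a * x ≤ a * ((a ^ n + b ^ m) / 2) := by gcongr; linarith
      _ < (1 - a) * a ^ n := by linarith
  have hym : y ≤ b ^ (m + 1) := by
    refine le_pow_of_mem_middleCantor hb₀ hb₁ hy ?_
    calc b * y ≤ b * ((a ^ n + b ^ m) / 2) := by gcongr; linarith
      _ < b * ((1 - b) * b ^ m) := by gcongr; linarith
      _ = (1 - b) * b ^ (m + 1) := by ring
  have hgap : a ^ n + b ^ (m + 1) < (a ^ n + b ^ m) / 2 := by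
    rw [pow_succ]
    linarith
  linarith

end SumSet

theorem stmt12 (α β : ℝ) (hα0 : 0 < α) (hα : α < 1 / 2) (hβ0 : 0 < β) (hβ : β < 1 / 2)
    (hτ : (α / (1 - 2 * α)) * (β / (1 - 2 * β)) < 1)
    (hirr : Irrational (Real.log α / Real.log β)) :
    sumSet α β ≠ Set.Icc 0 2 := by
  intro hsum
  have hwindow : 1 / (1 - 2 * β) < (2 - 3 * α) / α :=
    (thickness_mul_thickness_lt_one_iff hα0 hα hβ).1 hτ
  obtain ⟨n, m, hnm⟩ := exists_pow_div_pow_mem_Ioo hα0 (by linarith) hβ0 (by linarith) hirr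
    (one_div_pos.2 (by linarith)) hwindow
  refine add_pow_div_two_notMem_sumSet hα0 (by linarith) hβ0 hβ hnm ?_
  have hαn : α ^ n ≤ 1 := pow_le_one₀ hα0.le (by linarith)
  have hβm : β ^ m ≤ 1 := pow_le_one₀ hβ0.le (by linarith)
  rw [hsum]
  exact ⟨by positivity, by linarith⟩
end

section
/- Let p, q > 2 be real numbers with log p / log q = n₀/m₀ where n₀, m₀ are coprime positive integers, set α = 1/p, β = 1/q, and for nonzero λ and a ∈ {0,1}^{m₀}, b ∈ {0,1}^{n₀} define S_λ^{a,b}(t) := p^{−m₀}·t + (1−α)·∑_{k=0}^{m₀−1} a_k·α^k − λ·(1−β)·∑_{k=0}^{n₀−1} b_k·β^k (the contractions of the iterated function system whose attractor is C_α − λ·C_β). For λ ≠ 0, let I_λ denote the interior of the convex hull of C_α − λ·C_β (so I_λ = (−λ, 1) when λ > 0 and I_λ = (0, 1−λ) when λ < 0). Suppose (m₁, m₂) is an open interval not containing 0 such that: (i) for each λ ∈ (m₁, m₂), the union ⋃_{a,b} S_λ^{a,b}(I_λ) is connected; (ii) for each pair of indices (a,b), (a′,b′), either S_λ^{a,b}(I_λ)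 ∩ S_λ^{a′,b′}(I_λ) = ∅ for every λ ∈ (m₁, m₂), or there exists d ∈ ℝ with d ∈ S_λ^{a,b}(I_λ) ∩ S_λ^{a′,b′}(I_λ) for every λ ∈ (m₁, m₂). Let f, g : [0,1] → ℝ and suppose there is a point (x₀, y₀) ∈ C_α × C_β such that f is continuously differentiable on a neighborhood of x₀, g is continuously differentiable on a neighborhood of y₀, f′(x₀) ≠ 0, and m₁ < g′(y₀)/f′(x₀) < m₂. Then the set { f(x) − g(y) : x ∈ C_α, y ∈ C_β } contains a nonempty open interval. -/
open Set MeasureTheory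

/-- The contraction `S_λ^{a,b}(t) = p^(-m₀) t + (1-α) ∑ aₖ αᵏ - λ (1-β) ∑ bₖ βᵏ`,
with `α = 1/p`, `β = 1/q`. -/
noncomputable def S14 (p q l : ℝ) (m₀ n₀ : ℕ)
    (a : Fin m₀ → Bool) (b : Fin n₀ → Bool) (t : ℝ) : ℝ :=
  (p ^ m₀)⁻¹ * t
    + (1 - 1 / p) * ∑ k : Fin m₀, (if a k then (1 : ℝ) else 0) * (1 / p) ^ (k : ℕ)
    - l * ((1 - 1 / q) * ∑ k : Fin n₀, (if b k then (1 : ℝ) else 0) * (1 / q) ^ (k : ℕ))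

/-- The interior `I_λ` of the convex hull of `C_α - λ C_β` :
`(-λ, 1)` for `λ > 0` and `(0, 1 - λ)` for `λ < 0`. -/
noncomputable def I14 (l : ℝ) : Set ℝ :=
  if 0 < l then Set.Ioo (-l) 1 else Set.Ioo 0 (1 - l)

/-!
Both Cantor sets are self-similar with the same ratio `r = p^(-m₀) = q^(-n₀)`, and, changing signs
and reflecting `C_β` if necessary, `f` and `g` may be taken to have derivatives `f' > 0` and
`g' ≥ 0` at `x₀` and `y₀`. A pair of cylinders of size `h` then spans the interval from
`f x - g (y + h)` to `f (x + h) - g y`. Near `(x₀, y₀)` these spans are, up to an error `o(h)`,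
affine images of their linear models with `λ = g' / f'`, and the models of the children of a pair
of cylinders have connected union by (i). If nonempty open intervals have connected union, then
from every nonempty proper subfamily some interval overlaps one outside it. These overlaps are
finitely many strict inequalities, so they survive the error `o(h)`, and the spans of the children
cover the span of the parent. Iterating from a small pair of cylinders near `(x₀, y₀)`, every point
of its span lies in spans of arbitrarily small pairs, hence in the compact set `f(C_α) - g(C_β)`.
-/

open Filter Topology

lemma exists_inter_nonempty_of_isPreconnected_iUnion {ι T : Type*} [TopologicalSpace T]
    {s : ι → Set T} (hs : IsPreconnected (⋃ i, s i)) (ho : ∀ i, IsOpen (s i))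
    (hne : ∀ i, (s i).Nonempty) {A : Set ι} {i₀ i₁ : ι} (h₀ : i₀ ∈ A) (h₁ : i₁ ∉ A) :
    ∃ i ∈ A, ∃ j ∉ A, (s i ∩ s j).Nonempty := by
  have hmeets : ∀ {B : Set ι} {i}, i ∈ B → ((⋃ i, s i) ∩ ⋃ i ∈ B, s i).Nonempty :=
    fun {B i} hi ↦ (hne i).mono (subset_inter (subset_iUnion s i) (subset_biUnion_of_mem hi))
  have hcover : ⋃ i, s i ⊆ (⋃ i ∈ A, s i) ∪ ⋃ i ∈ Aᶜ, s i := by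
    rw [← biUnion_union, union_compl_self, biUnion_univ]
  obtain ⟨t, -, hA, hA'⟩ := hs _ _ (isOpen_biUnion fun i _ ↦ ho i) (isOpen_biUnion fun i _ ↦ ho i)
    hcover (hmeets h₀) (hmeets (B := Aᶜ) h₁)
  obtain ⟨i, hi, hti⟩ := mem_iUnion₂.1 hA
  obtain ⟨j, hj, htj⟩ := mem_iUnion₂.1 hA'
  exact ⟨i, hi, j, hj, t, hti, htj⟩

lemma exists_mem_Ioo_of_isPreconnected_iUnion_Ioo {ι M N : Type*} [LinearOrder M]
    [TopologicalSpace M] [OrderClosedTopology M] [LinearOrder N] {a b : ι → M} {a' b' : ι → N}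
    (hconn : IsPreconnected (⋃ i, Ioo (a i) (b i))) (hne : ∀ i, (Ioo (a i) (b i)).Nonempty)
    (hab : ∀ i j, a j < b i → a' j < b' i) {z : N} {i₀ i₁ : ι} (h₀ : a' i₀ < z) (h₁ : z < b' i₁) :
    ∃ i, z ∈ Ioo (a' i) (b' i) := by
  by_contra! hz
  have hleft : i₀ ∈ {i | b' i ≤ z} := not_lt.1 fun h ↦ hz i₀ ⟨h₀, h⟩
  obtain ⟨i, hi, j, hj, t, hti, htj⟩ :=
    exists_inter_nonempty_of_isPreconnected_iUnion hconn (fun _ ↦ isOpen_Ioo) hne hleft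
      (not_le.2 h₁)
  have hij : a' j < b' i := hab i j (htj.1.trans hti.2)
  exact hz j ⟨hij.trans_le hi, not_le.1 hj⟩

lemma tendsto_div_of_hasStrictDerivAt {f : ℝ → ℝ} {f' x₀ : ℝ} (hf : HasStrictDerivAt f f' x₀)
    (u v : ℝ) :
    Tendsto (fun p : ℝ × ℝ ↦ (f (p.1 + p.2 * v) - f (p.1 + p.2 * u)) / p.2)
      (𝓝 x₀ ×ˢ 𝓝[>] 0) (𝓝 (f' * (v - u))) := by
  have hpoint (w : ℝ) : Tendsto (fun p : ℝ × ℝ ↦ p.1 + p.2 * w) (𝓝 x₀ ×ˢ 𝓝[>] 0) (𝓝 x₀) := by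
    have hcont : Continuous fun p : ℝ × ℝ ↦ p.1 + p.2 * w := by fun_prop
    have hle : 𝓝 x₀ ×ˢ 𝓝[>] (0 : ℝ) ≤ 𝓝 (x₀, 0) := by
      rw [nhds_prod_eq]
      exact prod_mono_right _ nhdsWithin_le_nhds
    simpa using (hcont.tendsto (x₀, 0)).mono_left hle
  have hscale : ∀ᶠ p : ℝ × ℝ in 𝓝 x₀ ×ˢ 𝓝[>] 0, 0 < p.2 :=
    tendsto_snd.eventually self_mem_nhdsWithin
  have hlittle := (hasDerivAtFilter_iff_isLittleO.1 hf).comp_tendsto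
    ((hpoint v).prodMk_nhds (hpoint u))
  have hbig : (fun p : ℝ × ℝ ↦ p.1 + p.2 * v - (p.1 + p.2 * u)) =O[𝓝 x₀ ×ˢ 𝓝[>] 0] Prod.snd := by
    refine Asymptotics.IsBigO.of_bound |v - u| (Eventually.of_forall fun p ↦ le_of_eq ?_)
    rw [Real.norm_eq_abs, Real.norm_eq_abs, ← abs_mul]
    ring_nf
  have herror := (hlittle.trans_isBigO hbig).tendsto_div_nhds_zero
  refine (herror.add_const (f' * (v - u))).congr' ?_ |>.trans (by rw [zero_add])
  filter_upwards [hscale] with p hp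
  simp only [Function.comp_apply, smul_eq_mul]
  field_simp
  ring

lemma eventually_sub_lt_sub_of_hasStrictDerivAt {f g : ℝ → ℝ} {f' g' x₀ y₀ : ℝ}
    (hf : HasStrictDerivAt f f' x₀) (hg : HasStrictDerivAt g g' y₀) {u v w z : ℝ}
    (hlt : f' * u - g' * w < f' * v - g' * z) :
    ∀ᶠ p : (ℝ × ℝ) × ℝ in 𝓝 (x₀, y₀) ×ˢ 𝓝[>] 0,
      f (p.1.1 + p.2 * u) - g (p.1.2 + p.2 * w) < f (p.1.1 + p.2 * v) - g (p.1.2 + p.2 * z) := by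
  have hf_lim := (tendsto_div_of_hasStrictDerivAt hf u v).comp
    ((continuous_fst.tendsto (x₀, y₀)).prodMap (tendsto_id (x := 𝓝[>] (0 : ℝ))))
  have hg_lim := (tendsto_div_of_hasStrictDerivAt hg w z).comp
    ((continuous_snd.tendsto (x₀, y₀)).prodMap (tendsto_id (x := 𝓝[>] (0 : ℝ))))
  have hpos : 0 < f' * (v - u) - g' * (z - w) := by linarith
  have hscale : ∀ᶠ p : (ℝ × ℝ) × ℝ in 𝓝 (x₀, y₀) ×ˢ 𝓝[>] 0, 0 < p.2 :=
    tendsto_snd.eventually self_mem_nhdsWithin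
  filter_upwards [(hf_lim.sub hg_lim).eventually_const_lt hpos, hscale] with p hp hp₂
  simp only [Function.comp_apply, Prod.map_fst, Prod.map_snd, id_eq, ← sub_div] at hp
  linarith [(div_pos_iff_of_pos_right hp₂).1 hp]

lemma eventually_continuousAt_of_hasStrictDerivAt {f : ℝ → ℝ} {f' x₀ : ℝ}
    (hf : HasStrictDerivAt f f' x₀) : ∀ᶠ x in 𝓝 x₀, ContinuousAt f x := by
  obtain ⟨C, s, hs, hlip⟩ := hf.hasStrictFDerivAt.exists_lipschitzOnWith
  filter_upwards [eventually_mem_nhds_iff.2 hs] with x hx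
  exact hlip.continuousOn.continuousAt hx

/-- `K` is the attractor of the homogeneous iterated function system `t ↦ r * t + X i`, normalised
so that its convex hull is `[0, 1]`. -/
structure IsHomogeneousAttractor {ι : Type*} (r : ℝ) (X : ι → ℝ) (K : Set ℝ) : Prop where
  ratio_pos : 0 < r
  ratio_lt_one : r < 1
  isClosed : IsClosed K
  subset_Icc : K ⊆ Icc 0 1
  zero_mem : 0 ∈ K
  one_mem : 1 ∈ K
  mem_iff : ∀ x, x ∈ K ↔ ∃ i, ∃ c ∈ K, x = X i + r * c

/-- The scaled copy `x + h * K` is contained in `K`. The cylinders of a self-similar set `K` are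
such copies, here indexed by left endpoint and size. -/
def IsCylinder (K : Set ℝ) (x h : ℝ) : Prop := ∀ c ∈ K, x + h * c ∈ K

/-- The open interval between the extreme values of `f [x, x + h] - g [y, y + h]` for increasing
`f` and `g`. Its linear model at derivative ratio `l` is `diffIoo id (l * ·) h x y`. -/
def diffIoo (f g : ℝ → ℝ) (h x y : ℝ) : Set ℝ := Ioo (f x - g (y + h)) (f (x + h) - g y)

lemma diffIoo_comp_affine (f g : ℝ → ℝ) (x y s h u v : ℝ) :
    diffIoo (fun t ↦ f (x + s * t)) (fun t ↦ g (y + s * t)) h u v =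
      diffIoo f g (s * h) (x + s * u) (y + s * v) := by
  simp only [diffIoo, mul_add, add_assoc]

namespace IsHomogeneousAttractor

variable {ι κ : Type*} {r : ℝ} {X : ι → ℝ} {Y : κ → ℝ} {K L : Set ℝ}

lemma isCompact (hK : IsHomogeneousAttractor r X K) : IsCompact K :=
  isCompact_Icc.of_isClosed_subset hK.isClosed hK.subset_Icc

lemma digit_mem (hK : IsHomogeneousAttractor r X K) (i : ι) : X i ∈ K :=
  (hK.mem_iff _).2 ⟨i, 0, hK.zero_mem, by ring⟩

lemma digit_add_ratio_mem (hK : IsHomogeneousAttractor r X K) (i : ι) : X i + r ∈ K :=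
  (hK.mem_iff _).2 ⟨i, 1, hK.one_mem, by ring⟩

lemma exists_digit_eq_zero (hK : IsHomogeneousAttractor r X K) : ∃ i, X i = 0 := by
  obtain ⟨i, c, hc, h⟩ := (hK.mem_iff 0).1 hK.zero_mem
  have hXi := (hK.subset_Icc (hK.digit_mem i)).1
  have hrc := mul_nonneg hK.ratio_pos.le (hK.subset_Icc hc).1
  exact ⟨i, by linarith⟩

lemma exists_digit_add_ratio_eq_one (hK : IsHomogeneousAttractor r X K) : ∃ i, X i + r = 1 := by
  obtain ⟨i, c, hc, h⟩ := (hK.mem_iff 1).1 hK.one_mem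
  have hXi := (hK.subset_Icc (hK.digit_add_ratio_mem i)).2
  have hrc := mul_le_of_le_one_right hK.ratio_pos.le (hK.subset_Icc hc).2
  exact ⟨i, by linarith⟩

lemma reflect (hK : IsHomogeneousAttractor r X K) :
    IsHomogeneousAttractor r (fun i ↦ 1 - r - X i) ((1 - ·) ⁻¹' K) where
  ratio_pos := hK.ratio_pos
  ratio_lt_one := hK.ratio_lt_one
  isClosed := hK.isClosed.preimage (by fun_prop)
  subset_Icc x hx := by
    obtain ⟨h₀, h₁⟩ := hK.subset_Icc hx
    constructor <;> linarith
  zero_mem := by simpa using hK.one_mem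
  one_mem := by simpa using hK.zero_mem
  mem_iff x := by
    refine (hK.mem_iff (1 - x)).trans ⟨?_, ?_⟩
    · rintro ⟨i, c, hc, h⟩
      exact ⟨i, 1 - c, by simpa using hc, by linear_combination -h⟩
    · rintro ⟨i, c, hc, h⟩
      exact ⟨i, 1 - c, hc, by linear_combination -h⟩

lemma isCylinder_child (hK : IsHomogeneousAttractor r X K) {x h : ℝ} (hx : IsCylinder K x h)
    (i : ι) : IsCylinder K (x + h * X i) (h * r) := fun c hc ↦ by
  have hchild : X i + r * c ∈ K := (hK.mem_iff _).2 ⟨i, c, hc, rfl⟩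
  simpa only [mul_add, mul_assoc, add_assoc] using hx _ hchild

lemma exists_isCylinder_pow (hK : IsHomogeneousAttractor r X K) {x₀ : ℝ} (hx₀ : x₀ ∈ K) (n : ℕ) :
    ∃ x, IsCylinder K x (r ^ n) ∧ ∃ c ∈ K, x₀ = x + r ^ n * c := by
  induction n with
  | zero => exact ⟨0, by simp [IsCylinder], x₀, hx₀, by simp⟩
  | succ n ih =>
    obtain ⟨x, hx, c, hc, rfl⟩ := ih
    obtain ⟨i, d, hd, rfl⟩ := (hK.mem_iff c).1 hc
    exact ⟨x + r ^ n * X i, hK.isCylinder_child hx i, d, hd, by ring⟩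

lemma mem_Icc_of_isCylinder (hK : IsHomogeneousAttractor r X K) {x h : ℝ} (hx : IsCylinder K x h) :
    x ∈ Icc 0 1 ∧ x + h ∈ Icc 0 1 :=
  ⟨by simpa using hK.subset_Icc (hx 0 hK.zero_mem), by simpa using hK.subset_Icc (hx 1 hK.one_mem)⟩

lemma exists_isCylinder_mem_diffIoo (hK : IsHomogeneousAttractor r X K)
    (hL : IsHomogeneousAttractor r Y L) {f g : ℝ → ℝ}
    (hcover : ∀ h u v, 0 < h → IsCylinder K u h → IsCylinder L v h →
      diffIoo f g h u v ⊆ ⋃ p : ι × κ, diffIoo f g (h * r) (u + h * X p.1) (v + h * Y p.2))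
    {z : ℝ} (hz : z ∈ diffIoo f g 1 0 0) (n : ℕ) :
    ∃ u v, IsCylinder K u (r ^ n) ∧ IsCylinder L v (r ^ n) ∧ z ∈ diffIoo f g (r ^ n) u v := by
  induction n with
  | zero => exact ⟨0, 0, by simp [IsCylinder], by simp [IsCylinder], by simpa using hz⟩
  | succ n ih =>
    obtain ⟨u, v, hu, hv, hzn⟩ := ih
    obtain ⟨p, hp⟩ := mem_iUnion.1 (hcover _ u v (pow_pos hK.ratio_pos n) hu hv hzn)
    exact ⟨_, _, hK.isCylinder_child hu p.1, hL.isCylinder_child hv p.2, hp⟩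

lemma diffIoo_subset_image (hK : IsHomogeneousAttractor r X K)
    (hL : IsHomogeneousAttractor r Y L) {f g : ℝ → ℝ}
    (hf : ContinuousOn f (Icc 0 1)) (hg : ContinuousOn g (Icc 0 1))
    (hcover : ∀ h u v, 0 < h → IsCylinder K u h → IsCylinder L v h →
      diffIoo f g h u v ⊆ ⋃ p : ι × κ, diffIoo f g (h * r) (u + h * X p.1) (v + h * Y p.2)) :
    diffIoo f g 1 0 0 ⊆ (fun p : ℝ × ℝ ↦ f p.1 - g p.2) '' K ×ˢ L := by
  intro z hz
  have hcont : ContinuousOn (fun p : ℝ × ℝ ↦ f p.1 - g p.2) (K ×ˢ L) :=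
    ((hf.mono hK.subset_Icc).comp continuousOn_fst fun _ hp ↦ hp.1).sub
      ((hg.mono hL.subset_Icc).comp continuousOn_snd fun _ hp ↦ hp.2)
  have hclosed := ((hK.isCompact.prod hL.isCompact).image_of_continuousOn hcont).isClosed
  rw [← hclosed.closure_eq, Metric.mem_closure_iff]
  intro ε hε
  obtain ⟨δ₁, hδ₁, hfδ⟩ := Metric.uniformContinuousOn_iff.1
    (isCompact_Icc.uniformContinuousOn_of_continuous hf) (ε / 2) (by positivity)
  obtain ⟨δ₂, hδ₂, hgδ⟩ := Metric.uniformContinuousOn_iff.1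
    (isCompact_Icc.uniformContinuousOn_of_continuous hg) (ε / 2) (by positivity)
  obtain ⟨n, hn⟩ := exists_pow_lt_of_lt_one (lt_min hδ₁ hδ₂) hK.ratio_lt_one
  obtain ⟨u, v, hu, hv, hzn⟩ := hK.exists_isCylinder_mem_diffIoo hL hcover hz n
  obtain ⟨hu₀, hu₁⟩ := hK.mem_Icc_of_isCylinder hu
  obtain ⟨hv₀, hv₁⟩ := hL.mem_Icc_of_isCylinder hv
  have hdist (x : ℝ) : dist (x + r ^ n) x = r ^ n := by
    simp [abs_of_pos hK.ratio_pos]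
  have hfu := hfδ _ hu₁ _ hu₀ (by rw [hdist]; exact hn.trans_le (min_le_left _ _))
  have hgv := hgδ _ hv₁ _ hv₀ (by rw [hdist]; exact hn.trans_le (min_le_right _ _))
  have huK : u ∈ K := by simpa using hu 0 hK.zero_mem
  have hvL : v ∈ L := by simpa using hv 0 hL.zero_mem
  refine ⟨f u - g v, ⟨(u, v), ⟨huK, hvL⟩, rfl⟩, ?_⟩
  rw [Real.dist_eq, abs_lt] at hfu hgv ⊢
  constructor <;> linarith [hzn.1, hzn.2]

lemma eventually_diffIoo_subset_iUnion [Finite ι] [Finite κ] (hK : IsHomogeneousAttractor r X K)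
    (hL : IsHomogeneousAttractor r Y L) {f g : ℝ → ℝ} {f' g' x₀ y₀ : ℝ}
    (hf : HasStrictDerivAt f f' x₀) (hg : HasStrictDerivAt g g' y₀) (hf' : 0 < f') (hg' : 0 ≤ g')
    (hconn : IsPreconnected (⋃ p : ι × κ, diffIoo id (g' / f' * ·) r (X p.1) (Y p.2))) :
    ∀ᶠ q : (ℝ × ℝ) × ℝ in 𝓝 (x₀, y₀) ×ˢ 𝓝[>] 0, diffIoo f g q.2 q.1.1 q.1.2 ⊆
      ⋃ p : ι × κ, diffIoo f g (q.2 * r) (q.1.1 + q.2 * X p.1) (q.1.2 + q.2 * Y p.2) := by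
  have hne (p : ι × κ) : (diffIoo id (g' / f' * ·) r (X p.1) (Y p.2)).Nonempty := by
    have hr := hK.ratio_pos
    have hlr : 0 ≤ g' / f' * r := by positivity
    exact nonempty_Ioo.2 (by simp only [id_eq, mul_add]; linarith)
  have hab : ∀ᶠ q : (ℝ × ℝ) × ℝ in 𝓝 (x₀, y₀) ×ˢ 𝓝[>] 0, ∀ i j : ι × κ,
      X j.1 - g' / f' * (Y j.2 + r) < X i.1 + r - g' / f' * Y i.2 →
      f (q.1.1 + q.2 * X j.1) - g (q.1.2 + q.2 * (Y j.2 + r)) <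
        f (q.1.1 + q.2 * (X i.1 + r)) - g (q.1.2 + q.2 * Y i.2) := by
    simp only [eventually_all]
    intro i j hij
    refine eventually_sub_lt_sub_of_hasStrictDerivAt hf hg ?_
    have hscaled := mul_lt_mul_of_pos_left hij hf'
    field_simp at hscaled
    linarith
  obtain ⟨i₀, hi₀⟩ := hK.exists_digit_eq_zero
  obtain ⟨i₁, hi₁⟩ := hK.exists_digit_add_ratio_eq_one
  obtain ⟨j₀, hj₀⟩ := hL.exists_digit_eq_zero
  obtain ⟨j₁, hj₁⟩ := hL.exists_digit_add_ratio_eq_one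
  filter_upwards [hab] with ⟨⟨x, y⟩, h⟩ hq z hz
  obtain ⟨p, hp⟩ := exists_mem_Ioo_of_isPreconnected_iUnion_Ioo hconn hne hq (z := z)
    (i₀ := (i₀, j₁)) (i₁ := (i₁, j₀)) (by simpa [hi₀, hj₁] using hz.1)
    (by simpa [hi₁, hj₀] using hz.2)
  refine mem_iUnion.2 ⟨p, ?_⟩
  simpa only [diffIoo, mul_add, add_assoc] using hp

lemma exists_isCylinder_subset_ball (hK : IsHomogeneousAttractor r X K)
    (hL : IsHomogeneousAttractor r Y L) {x₀ y₀ δ : ℝ} (hx₀ : x₀ ∈ K) (hy₀ : y₀ ∈ L) (hδ : 0 < δ) :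
    ∃ s ∈ Ioo 0 δ, ∃ x y, IsCylinder K x s ∧ IsCylinder L y s ∧
      ∀ t ∈ Icc (0 : ℝ) 1, x + s * t ∈ Metric.ball x₀ δ ∧ y + s * t ∈ Metric.ball y₀ δ := by
  obtain ⟨n, hn⟩ := exists_pow_lt_of_lt_one hδ hK.ratio_lt_one
  have hs : 0 < r ^ n := pow_pos hK.ratio_pos n
  obtain ⟨x, hx, c, hc, rfl⟩ := hK.exists_isCylinder_pow hx₀ n
  obtain ⟨y, hy, d, hd, rfl⟩ := hL.exists_isCylinder_pow hy₀ n
  have hball (a : ℝ) {c t : ℝ} (hc : c ∈ Icc (0 : ℝ) 1) (ht : t ∈ Icc (0 : ℝ) 1) :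
      a + r ^ n * t ∈ Metric.ball (a + r ^ n * c) δ := by
    rw [Metric.mem_ball, dist_add_left, Real.dist_eq, ← mul_sub, abs_mul, abs_of_pos hs]
    have htc : |t - c| ≤ 1 := abs_sub_le_iff.2 ⟨by linarith [ht.2, hc.1], by linarith [hc.2, ht.1]⟩
    exact (mul_le_of_le_one_right hs.le htc).trans_lt hn
  exact ⟨r ^ n, ⟨hs, hn⟩, x, y, hx, hy,
    fun t ht ↦ ⟨hball x (hK.subset_Icc hc) ht, hball y (hL.subset_Icc hd) ht⟩⟩

lemma diffIoo_subset_image_of_isCylinder (hK : IsHomogeneousAttractor r X K)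
    (hL : IsHomogeneousAttractor r Y L) {f g : ℝ → ℝ} {x y s : ℝ} (hs : 0 < s)
    (hx : IsCylinder K x s) (hy : IsCylinder L y s)
    (hf : ∀ t ∈ Icc (0 : ℝ) 1, ContinuousAt f (x + s * t))
    (hg : ∀ t ∈ Icc (0 : ℝ) 1, ContinuousAt g (y + s * t))
    (hcover : ∀ h ∈ Ioc 0 s, ∀ u ∈ Icc (0 : ℝ) 1, ∀ v ∈ Icc (0 : ℝ) 1,
      diffIoo f g h (x + s * u) (y + s * v) ⊆
        ⋃ p : ι × κ, diffIoo f g (h * r) (x + s * u + h * X p.1) (y + s * v + h * Y p.2)) :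
    diffIoo f g s x y ⊆ (fun p : ℝ × ℝ ↦ f p.1 - g p.2) '' K ×ˢ L := by
  have hrescaled := hK.diffIoo_subset_image hL (f := fun t ↦ f (x + s * t))
    (g := fun t ↦ g (y + s * t))
    (fun t ht ↦ ((hf t ht).comp (f := (x + s * ·)) (by fun_prop)).continuousWithinAt)
    (fun t ht ↦ ((hg t ht).comp (f := (y + s * ·)) (by fun_prop)).continuousWithinAt)
    fun h u v hh hu hv ↦ by
      obtain ⟨hu₀, hu₁⟩ := hK.mem_Icc_of_isCylinder hu
      have hh₁ : h ≤ 1 := by linarith [hu₀.1, hu₁.2]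
      simp only [diffIoo_comp_affine, mul_add, ← add_assoc, ← mul_assoc]
      exact hcover _ ⟨mul_pos hs hh, mul_le_of_le_one_right hs.le hh₁⟩ u hu₀ v
        (hL.mem_Icc_of_isCylinder hv).1
  intro z hz
  obtain ⟨⟨u, v⟩, ⟨hu, hv⟩, rfl⟩ := hrescaled (by simpa [diffIoo_comp_affine] using hz)
  exact ⟨(x + s * u, y + s * v), ⟨hx u hu, hy v hv⟩, rfl⟩

lemma exists_Ioo_subset_of_deriv_nonneg [Finite ι] [Finite κ]
    (hK : IsHomogeneousAttractor r X K) (hL : IsHomogeneousAttractor r Y L)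
    {f g : ℝ → ℝ} {f' g' x₀ y₀ : ℝ} (hx₀ : x₀ ∈ K) (hy₀ : y₀ ∈ L)
    (hf : HasStrictDerivAt f f' x₀) (hg : HasStrictDerivAt g g' y₀) (hf' : 0 < f') (hg' : 0 ≤ g')
    (hconn : IsPreconnected (⋃ p : ι × κ, diffIoo id (g' / f' * ·) r (X p.1) (Y p.2))) :
    ∃ a b, a < b ∧ Ioo a b ⊆ (fun p : ℝ × ℝ ↦ f p.1 - g p.2) '' K ×ˢ L := by
  have hlt := eventually_sub_lt_sub_of_hasStrictDerivAt hf hg (u := 0) (v := 1) (w := 1) (z := 0)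
    (by linarith)
  have hcont := ((eventually_continuousAt_of_hasStrictDerivAt hf).prod_nhds
    (eventually_continuousAt_of_hasStrictDerivAt hg)).prod_inl (𝓝[>] (0 : ℝ))
  have hcover := hK.eventually_diffIoo_subset_iUnion hL hf hg hf' hg' hconn
  obtain ⟨⟨δ₁, δ₂⟩, ⟨hδ₁, hδ₂⟩, hlocal⟩ := (Metric.nhds_basis_ball.prod
    (nhdsGT_basis 0)).eventually_iff.1 (hlt.and (hcont.and hcover))
  obtain ⟨s, ⟨hs, hsδ⟩, x, y, hx, hy, hxy⟩ :=
    hK.exists_isCylinder_subset_ball hL hx₀ hy₀ (lt_min hδ₁ hδ₂)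
  have hmem {u v h : ℝ} (hu : u ∈ Icc (0 : ℝ) 1) (hv : v ∈ Icc (0 : ℝ) 1) (hh : h ∈ Ioc 0 s) :
      ((x + s * u, y + s * v), h) ∈ Metric.ball (x₀, y₀) δ₁ ×ˢ Ioo 0 δ₂ := by
    rw [← ball_prod_same]
    exact ⟨⟨Metric.ball_subset_ball (min_le_left _ _) (hxy u hu).1,
      Metric.ball_subset_ball (min_le_left _ _) (hxy v hv).2⟩, hh.1,
      hh.2.trans_lt (hsδ.trans_le (min_le_right _ _))⟩
  have h0 : (0 : ℝ) ∈ Icc (0 : ℝ) 1 := left_mem_Icc.2 zero_le_one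
  have hss : s ∈ Ioc 0 s := right_mem_Ioc.2 hs
  refine ⟨f x - g (y + s), f (x + s) - g y, by simpa using (hlocal (hmem h0 h0 hss)).1, ?_⟩
  exact hK.diffIoo_subset_image_of_isCylinder hL hs hx hy
    (fun t ht ↦ (hlocal (hmem ht ht hss)).2.1.1) (fun t ht ↦ (hlocal (hmem ht ht hss)).2.1.2)
    fun h hh u hu v hv ↦ (hlocal (hmem hu hv hh)).2.2

end IsHomogeneousAttractor

lemma I14_of_nonneg {l : ℝ} (hl : 0 ≤ l) : I14 l = Ioo (-l) 1 := by
  obtain rfl | hl := hl.eq_or_lt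
  · simp [I14]
  · exact if_pos hl

lemma I14_of_nonpos {l : ℝ} (hl : l ≤ 0) : I14 l = Ioo 0 (1 - l) := if_neg hl.not_gt

lemma image_I14_of_nonneg {l r : ℝ} (hr : 0 < r) (hl : 0 ≤ l) (x y : ℝ) :
    (fun t ↦ r * t + (x - l * y)) '' I14 l = diffIoo id (l * ·) r x y := by
  rw [I14_of_nonneg hl, image_affine_Ioo hr, diffIoo]
  congr 1 <;> simp only [id_eq] <;> ring

lemma image_I14_of_nonpos {l r : ℝ} (hr : 0 < r) (hl : l ≤ 0) (x y : ℝ) :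
    (fun t ↦ l + t) '' ((fun t ↦ r * t + (x - l * y)) '' I14 l) =
      diffIoo id (-l * ·) r x (1 - r - y) := by
  rw [I14_of_nonpos hl, image_affine_Ioo hr, image_const_add_Ioo, diffIoo]
  congr 1 <;> simp only [id_eq] <;> ring

namespace IsHomogeneousAttractor

variable {ι κ : Type*} [Finite ι] [Finite κ] {r : ℝ} {X : ι → ℝ} {Y : κ → ℝ} {K L : Set ℝ}

lemma exists_Ioo_subset_of_deriv_pos (hK : IsHomogeneousAttractor r X K)
    (hL : IsHomogeneousAttractor r Y L) {f g : ℝ → ℝ} {f' g' x₀ y₀ : ℝ} (hx₀ : x₀ ∈ K)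
    (hy₀ : y₀ ∈ L) (hf : HasStrictDerivAt f f' x₀) (hg : HasStrictDerivAt g g' y₀) (hf' : 0 < f')
    (hconn : IsPreconnected
      (⋃ i, ⋃ j, (fun t ↦ r * t + (X i - g' / f' * Y j)) '' I14 (g' / f'))) :
    ∃ a b, a < b ∧ Ioo a b ⊆ (fun p : ℝ × ℝ ↦ f p.1 - g p.2) '' K ×ˢ L := by
  obtain hg' | hg' := le_total 0 g'
  · simp only [image_I14_of_nonneg hK.ratio_pos (div_nonneg hg' hf'.le)] at hconn
    exact hK.exists_Ioo_subset_of_deriv_nonneg hL hx₀ hy₀ hf hg hf' hg' (by rwa [iUnion_prod'])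
  · have hshift := hconn.image (g' / f' + ·) (by fun_prop)
    simp only [image_iUnion, image_I14_of_nonpos hK.ratio_pos
      (div_nonpos_of_nonpos_of_nonneg hg' hf'.le), ← neg_div] at hshift
    have hreflect : HasStrictDerivAt (fun t ↦ g (1 - t)) (-g') (1 - y₀) := by
      have hg₁ : HasStrictDerivAt g g' (1 - (1 - y₀)) := by rwa [sub_sub_cancel]
      exact (hg₁.comp (1 - y₀) ((hasStrictDerivAt_id (1 - y₀)).const_sub 1)).congr_deriv (by ring)
    obtain ⟨a, b, hab, hsub⟩ := hK.exists_Ioo_subset_of_deriv_nonneg hL.reflect hx₀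
      (y₀ := 1 - y₀) (by simpa using hy₀) hf hreflect hf' (neg_nonneg.2 hg')
      (by rwa [iUnion_prod'])
    refine ⟨a, b, hab, fun z hz ↦ ?_⟩
    obtain ⟨⟨x, y⟩, ⟨hx, hy⟩, rfl⟩ := hsub hz
    exact ⟨(x, 1 - y), ⟨hx, hy⟩, rfl⟩

theorem exists_Ioo_subset_of_deriv_ne_zero (hK : IsHomogeneousAttractor r X K)
    (hL : IsHomogeneousAttractor r Y L) {f g : ℝ → ℝ} {f' g' x₀ y₀ : ℝ} (hx₀ : x₀ ∈ K)
    (hy₀ : y₀ ∈ L) (hf : HasStrictDerivAt f f' x₀) (hg : HasStrictDerivAt g g' y₀) (hf' : f' ≠ 0)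
    (hconn : IsPreconnected
      (⋃ i, ⋃ j, (fun t ↦ r * t + (X i - g' / f' * Y j)) '' I14 (g' / f'))) :
    ∃ a b, a < b ∧ Ioo a b ⊆ (fun p : ℝ × ℝ ↦ f p.1 - g p.2) '' K ×ˢ L := by
  obtain hneg | hpos := hf'.lt_or_gt
  · obtain ⟨a, b, hab, hsub⟩ := hK.exists_Ioo_subset_of_deriv_pos hL hx₀ hy₀ hf.neg hg.neg
      (neg_pos.2 hneg) (by simpa only [neg_div_neg_eq] using hconn)
    refine ⟨-b, -a, neg_lt_neg hab, fun z hz ↦ ?_⟩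
    obtain ⟨p, hp, hpz⟩ := hsub (show -z ∈ Ioo a b from ⟨lt_neg.1 hz.2, neg_lt.1 hz.1⟩)
    simp only [Pi.neg_apply] at hpz
    exact ⟨p, hp, by linarith⟩
  · exact hK.exists_Ioo_subset_of_deriv_pos hL hx₀ hy₀ hf hg hpos hconn

end IsHomogeneousAttractor

/-- The left endpoint of the cylinder of `middleCantor a` whose first `m` digits are `w`. -/
noncomputable def cylinderPt (a : ℝ) {m : ℕ} (w : Fin m → Bool) : ℝ :=
  (1 - a) * ∑ k : Fin m, (if w k then (1 : ℝ) else 0) * a ^ (k : ℕ)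

lemma middleCantor_eq_range (a : ℝ) :
    middleCantor a = range fun ε : ℕ → Bool ↦ (1 - a) * Cardinal.cantorFunction a ε := by
  ext x
  simp only [middleCantor, Cardinal.cantorFunction, Cardinal.cantorFunctionAux, Bool.cond_eq_ite,
    mem_ofPred_eq, mem_range, eq_comm]

lemma continuous_cantorFunction {a : ℝ} (h₀ : 0 ≤ a) (h₁ : a < 1) :
    Continuous (Cardinal.cantorFunction a) := by
  refine continuous_tsum (u := (a ^ ·)) (fun k ↦ ?_) (summable_geometric_of_lt_one h₀ h₁)
    fun k ε ↦ ?_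
  · exact (continuous_of_discreteTopology (f := fun b : Bool ↦ cond b (a ^ k) 0)).comp
      (continuous_apply k)
  · cases h : ε k <;> simp [h, abs_of_nonneg h₀, pow_nonneg h₀]

lemma cantorFunction_false (a : ℝ) : Cardinal.cantorFunction a (fun _ ↦ false) = 0 := by
  simp [Cardinal.cantorFunction]

lemma cantorFunction_true {a : ℝ} (h₀ : 0 ≤ a) (h₁ : a < 1) :
    Cardinal.cantorFunction a (fun _ ↦ true) = (1 - a)⁻¹ := by
  simp [Cardinal.cantorFunction, tsum_geometric_of_lt_one h₀ h₁]

lemma cantorFunction_eq_cylinderPt_add {a : ℝ} (h₀ : 0 ≤ a) (h₁ : a < 1) (m : ℕ) (ε : ℕ → Bool) :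
    (1 - a) * Cardinal.cantorFunction a ε = cylinderPt a (fun k : Fin m ↦ ε k) +
      a ^ m * ((1 - a) * Cardinal.cantorFunction a fun k ↦ ε (k + m)) := by
  have hsplit := (Cardinal.summable_cantor_function ε h₀ h₁).sum_add_tsum_nat_add m
  have hhead : ∑ k ∈ Finset.range m, Cardinal.cantorFunctionAux a ε k =
      ∑ k : Fin m, (if ε k then (1 : ℝ) else 0) * a ^ (k : ℕ) := by
    rw [Finset.sum_range]
    exact Finset.sum_congr rfl fun k _ ↦ by simp [Cardinal.cantorFunctionAux, Bool.cond_eq_ite]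
  have htail : ∑' k, Cardinal.cantorFunctionAux a ε (k + m) =
      a ^ m * Cardinal.cantorFunction a fun k ↦ ε (k + m) := by
    rw [Cardinal.cantorFunction, ← tsum_mul_left]
    exact tsum_congr fun k ↦ by cases h : ε (k + m) <;> simp [h, pow_add, mul_comm]
  rw [Cardinal.cantorFunction, ← hsplit, hhead, htail, cylinderPt]
  ring

lemma mem_middleCantor_iff_exists_cylinderPt {a : ℝ} (h₀ : 0 ≤ a) (h₁ : a < 1) (m : ℕ) (x : ℝ) :
    x ∈ middleCantor a ↔
      ∃ w : Fin m → Bool, ∃ c ∈ middleCantor a, x = cylinderPt a w + a ^ m * c := by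
  rw [middleCantor_eq_range]
  constructor
  · rintro ⟨ε, rfl⟩
    exact ⟨fun k ↦ ε k, _, ⟨fun k ↦ ε (k + m), rfl⟩, cantorFunction_eq_cylinderPt_add h₀ h₁ m ε⟩
  · rintro ⟨w, _, ⟨ε, rfl⟩, rfl⟩
    refine ⟨fun k ↦ if h : k < m then w ⟨k, h⟩ else ε (k - m), ?_⟩
    simpa using cantorFunction_eq_cylinderPt_add h₀ h₁ m
      fun k ↦ if h : k < m then w ⟨k, h⟩ else ε (k - m)

lemma middleCantor_isHomogeneousAttractor {a : ℝ} (h₀ : 0 < a) (h₁ : a < 1) {m : ℕ}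
    (hm : m ≠ 0) : IsHomogeneousAttractor (a ^ m) (cylinderPt a (m := m)) (middleCantor a) where
  ratio_pos := pow_pos h₀ m
  ratio_lt_one := pow_lt_one₀ h₀.le h₁ hm
  isClosed := by
    rw [middleCantor_eq_range]
    exact (isCompact_range (continuous_const.mul (continuous_cantorFunction h₀.le h₁))).isClosed
  subset_Icc := by
    rw [middleCantor_eq_range]
    rintro _ ⟨ε, rfl⟩
    have hlo := Cardinal.cantorFunction_le (f := fun _ ↦ false) (g := ε) h₀.le h₁ (by simp)
    have hhi := Cardinal.cantorFunction_le (f := ε) (g := fun _ ↦ true) h₀.le h₁ (by simp)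
    rw [cantorFunction_false] at hlo
    rw [cantorFunction_true h₀.le h₁] at hhi
    have ha : 0 < 1 - a := sub_pos.2 h₁
    exact ⟨by positivity, (le_inv_mul_iff₀ ha).1 (by simpa using hhi)⟩
  zero_mem := middleCantor_eq_range a ▸ ⟨fun _ ↦ false, by simp [cantorFunction_false]⟩
  one_mem := middleCantor_eq_range a ▸ ⟨fun _ ↦ true, by
    simp [cantorFunction_true h₀.le h₁, (sub_pos.2 h₁).ne']⟩
  mem_iff := mem_middleCantor_iff_exists_cylinderPt h₀.le h₁ m

lemma S14_eq (p q l : ℝ) {m₀ n₀ : ℕ} (a : Fin m₀ → Bool) (b : Fin n₀ → Bool) :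
    S14 p q l m₀ n₀ a b =
      fun t ↦ (1 / p) ^ m₀ * t + (cylinderPt (1 / p) a - l * cylinderPt (1 / q) b) := by
  ext t
  simp only [S14, cylinderPt, one_div, inv_pow]
  ring

lemma pow_eq_pow_of_log_div_log_eq {p q : ℝ} (hp : 1 < p) (hq : 1 < q) {m n : ℕ} (hm : m ≠ 0)
    (h : Real.log p / Real.log q = n / m) : p ^ m = q ^ n := by
  have hlog : Real.log q ≠ 0 := (Real.log_pos hq).ne'
  refine Real.log_injOn_pos (pow_pos (one_pos.trans hp) m) (pow_pos (one_pos.trans hq) n) ?_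
  rw [Real.log_pow, Real.log_pow, mul_comm, ← div_eq_div_iff hlog (Nat.cast_ne_zero.2 hm)]
  exact h

theorem stmt14_general {p q : ℝ} (hp : 1 < p) (hq : 1 < q) {n₀ m₀ : ℕ} (hn₀ : n₀ ≠ 0)
    (hm₀ : m₀ ≠ 0) (hratio : Real.log p / Real.log q = n₀ / m₀) {f g : ℝ → ℝ} {f' g' x₀ y₀ : ℝ}
    (hx₀ : x₀ ∈ middleCantor (1 / p)) (hy₀ : y₀ ∈ middleCantor (1 / q))
    (hf : HasStrictDerivAt f f' x₀) (hg : HasStrictDerivAt g g' y₀) (hf' : f' ≠ 0)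
    (hconn : IsPreconnected (⋃ (a : Fin m₀ → Bool) (b : Fin n₀ → Bool),
      S14 p q (g' / f') m₀ n₀ a b '' I14 (g' / f'))) :
    ∃ u v : ℝ, u < v ∧ Ioo u v ⊆
      {z : ℝ | ∃ x ∈ middleCantor (1 / p), ∃ y ∈ middleCantor (1 / q), z = f x - g y} := by
  have hpow : (1 / q) ^ n₀ = (1 / p) ^ m₀ := by
    rw [one_div_pow, one_div_pow, pow_eq_pow_of_log_div_log_eq hp hq hm₀ hratio]
  have hK := middleCantor_isHomogeneousAttractor (a := 1 / p) (by positivity)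
    ((div_lt_one (by positivity)).2 hp) hm₀
  have hL := middleCantor_isHomogeneousAttractor (a := 1 / q) (by positivity)
    ((div_lt_one (by positivity)).2 hq) hn₀
  simp only [S14_eq] at hconn
  obtain ⟨u, v, huv, hsub⟩ :=
    hK.exists_Ioo_subset_of_deriv_ne_zero (hpow ▸ hL) hx₀ hy₀ hf hg hf' hconn
  refine ⟨u, v, huv, fun z hz ↦ ?_⟩
  obtain ⟨⟨x, y⟩, ⟨hx, hy⟩, hxy⟩ := hsub hz
  exact ⟨x, hx, y, hy, hxy.symm⟩

theorem stmt14 (p q : ℝ) (hp : 2 < p) (hq : 2 < q) (n₀ m₀ : ℕ)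
    (hn₀ : 0 < n₀) (hm₀ : 0 < m₀) (hcop : Nat.Coprime n₀ m₀)
    (hratio : Real.log p / Real.log q = (n₀ : ℝ) / (m₀ : ℝ))
    (m₁ m₂ : ℝ) (hm : m₁ < m₂) (h0 : (0 : ℝ) ∉ Set.Ioo m₁ m₂)
    -- (i) for each `λ ∈ (m₁, m₂)` the union of the images of `I_λ` is connected:
    (hconn : ∀ l ∈ Set.Ioo m₁ m₂,
      IsConnected (⋃ (a : Fin m₀ → Bool) (b : Fin n₀ → Bool), S14 p q l m₀ n₀ a b '' I14 l))
    -- (ii) any two images are either disjoint for all `λ`, or share a common point `d`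
    -- for all `λ`:
    (hlink : ∀ (a a' : Fin m₀ → Bool) (b b' : Fin n₀ → Bool),
      (∀ l ∈ Set.Ioo m₁ m₂,
        S14 p q l m₀ n₀ a b '' I14 l ∩ S14 p q l m₀ n₀ a' b' '' I14 l = ∅) ∨
      (∃ d : ℝ, ∀ l ∈ Set.Ioo m₁ m₂,
        d ∈ S14 p q l m₀ n₀ a b '' I14 l ∩ S14 p q l m₀ n₀ a' b' '' I14 l))
    (f g : ℝ → ℝ) (x₀ y₀ : ℝ)
    (hx₀ : x₀ ∈ middleCantor (1 / p)) (hy₀ : y₀ ∈ middleCantor (1 / q))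
    (hf : ∃ U ∈ nhds x₀, ContDiffOn ℝ 1 f U) (hg : ∃ V ∈ nhds y₀, ContDiffOn ℝ 1 g V)
    (hf' : deriv f x₀ ≠ 0)
    (hm₁ : m₁ < deriv g y₀ / deriv f x₀) (hm₂ : deriv g y₀ / deriv f x₀ < m₂) :
    ∃ u v : ℝ, u < v ∧ Set.Ioo u v ⊆
      {z : ℝ | ∃ x ∈ middleCantor (1 / p), ∃ y ∈ middleCantor (1 / q), z = f x - g y} := by
  obtain ⟨U, hU, hfU⟩ := hf
  obtain ⟨V, hV, hgV⟩ := hg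
  exact stmt14_general (by linarith) (by linarith) hn₀.ne' hm₀.ne' hratio hx₀ hy₀
    ((hfU.contDiffAt hU).hasStrictDerivAt one_ne_zero)
    ((hgV.contDiffAt hV).hasStrictDerivAt one_ne_zero) hf' (hconn _ ⟨hm₁, hm₂⟩).isPreconnected
end

section
/- Let γ = (1 + √5)/2 be the golden ratio, and set α = γ^{−3}, β = γ^{−2}. Then the set { √x − √y : x ∈ C_α, y ∈ C_β } contains a nonempty open interval. -/
open Set MeasureTheory

/-!
Put `r = γ⁻¹`, so that `r² = 1 - r`, `α = r³` and `β = r²`. The equation `√x - √y = t` reads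
`x = (t + √y)²`, so the task is to make `C_α` meet the image of `C_β` under `f y = (t + √y)²`, for
every `t` in some interval.

The product of the thicknesses of `C_α` and `C_β` is below `1`, so the gap lemma does not apply;
instead one controls the order in which the two Cantor sets are subdivided. Suppose that a basic
interval `I` of `C_α`, of length `r^(3p)`, meets the image of a basic interval `J` of `C_β`, of
length `r^(2q)`. If the gap of `I` is at most as long as `f(J)`, a child of `I` still meets `f(J)`;
if the image of the gap of `J` is at most as long as `I`, then `I` still meets the image of a child
of `J`. When the slopes of `f` lie in `[1 + r², 1 + r]`, the identities `1 - 2r³ = (1 + r²)r²` and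
`(1 + r)(1 - 2r²) = r²` turn these two conditions into `2q ≤ 3p + 2` and `3p ≤ 2q + 2`. Hence
subdividing the longer of `I` and `J` is always allowed, and it keeps `|3p - 2q| ≤ 2`. So there are
such pairs at arbitrarily high levels, and `C_α` meets `f(C_β)` by compactness.

For `0.26 < t < 0.3` the intervals `I = [1 - α, 1]` and `J = [β - β², β] = [r³, r²]` are a possible
start: on `J`, difference quotients of `f` have the form `1 + 2t / (√y + √y')`, where
`√(r³) ≤ √y, √y' ≤ r`.
-/

open Filter Topology

/-- `x` is the left endpoint of one of the `2 ^ n` basic intervals `[x, x + a ^ n]` of level `n` in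
the construction of `middleCantor a`. The set `s` consists of the positions of the digits `1`. -/
def IsLeftEndpoint (a : ℝ) (n : ℕ) (x : ℝ) : Prop :=
  ∃ s ⊆ Finset.range n, x = (1 - a) * ∑ k ∈ s, a ^ k

namespace IsLeftEndpoint

variable {a x : ℝ} {n : ℕ}

lemma zero (a : ℝ) : IsLeftEndpoint a 0 0 := ⟨∅, Finset.empty_subset _, by simp⟩

lemma left (hx : IsLeftEndpoint a n x) : IsLeftEndpoint a (n + 1) x := by
  obtain ⟨s, hs, rfl⟩ := hx
  exact ⟨s, hs.trans (Finset.range_subset_range.2 n.le_succ), rfl⟩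

lemma right (hx : IsLeftEndpoint a n x) : IsLeftEndpoint a (n + 1) (x + (1 - a) * a ^ n) := by
  obtain ⟨s, hs, rfl⟩ := hx
  have hn : n ∉ s := fun h => Finset.notMem_range_self (hs h)
  refine ⟨insert n s, ?_, by rw [Finset.sum_insert hn]; ring⟩
  rw [Finset.range_add_one]
  exact Finset.insert_subset_insert n hs

lemma mem_middleCantor (hx : IsLeftEndpoint a n x) : x ∈ middleCantor a := by
  obtain ⟨s, -, rfl⟩ := hx
  refine ⟨fun k => decide (k ∈ s), ?_⟩
  rw [tsum_eq_sum (s := s) fun k hk => by simp [hk]]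
  congr 1
  exact Finset.sum_congr rfl fun k hk => by simp [hk]

end IsLeftEndpoint

lemma isCompact_middleCantor {a : ℝ} (ha0 : 0 ≤ a) (ha1 : a < 1) : IsCompact (middleCantor a) := by
  have hcont : Continuous fun ε : ℕ → Bool => (1 - a) * ∑' k : ℕ, (if ε k then a ^ k else 0) := by
    refine continuous_const.mul
      (continuous_tsum (fun k => ?_) (summable_geometric_of_lt_one ha0 ha1) fun k ε => ?_)
    · exact (continuous_of_discreteTopology (f := fun e : Bool => if e then a ^ k else 0)).comp
        (continuous_apply k)
    · split_ifs
      · exact (Real.norm_of_nonneg (pow_nonneg ha0 k)).le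
      · simpa only [norm_zero] using pow_nonneg ha0 k
  have hrange : middleCantor a = range fun ε : ℕ → Bool =>
      (1 - a) * ∑' k : ℕ, (if ε k then a ^ k else 0) :=
    ext fun x => exists_congr fun ε => eq_comm
  exact hrange ▸ isCompact_range hcont

/-- Some basic interval `[x, x + a ^ p]` of `middleCantor a` meets `[f y, f (y + b ^ q)]`, which for
a continuous increasing `f` is the image of the basic interval `[y, y + b ^ q]` of `middleCantor b`.
The latter is required to lie in `s`, the set on which the slopes of `f` are under control. -/
def Linked (a b : ℝ) (f : ℝ → ℝ) (s : Set ℝ) (p q : ℕ) : Prop :=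
  ∃ x y, IsLeftEndpoint a p x ∧ IsLeftEndpoint b q y ∧ Icc y (y + b ^ q) ⊆ s ∧
    f y ≤ x + a ^ p ∧ x ≤ f (y + b ^ q)

namespace Linked

variable {a b m M r : ℝ} {f : ℝ → ℝ} {s : Set ℝ} {p q : ℕ}

lemma split_left (H : Linked a b f s p q) (hb : 0 ≤ b)
    (hf : MonotoneOn (fun y => f y - m * y) s) (hgap : (1 - 2 * a) * a ^ p ≤ m * b ^ q) :
    Linked a b f s (p + 1) q := by
  obtain ⟨x, y, hx, hy, hs, hfy, hxf⟩ := H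
  by_cases hleft : f y ≤ x + a ^ (p + 1)
  · exact ⟨x, y, hx.left, hy, hs, hleft, hxf⟩
  · have hle : y ≤ y + b ^ q := le_add_of_nonneg_right (pow_nonneg hb q)
    have hlen : f y - m * y ≤ f (y + b ^ q) - m * (y + b ^ q) :=
      hf (hs (left_mem_Icc.2 hle)) (hs (right_mem_Icc.2 hle)) hle
    rw [pow_succ] at hleft
    refine ⟨_, y, hx.right, hy, hs, ?_, by linarith⟩
    rw [pow_succ]
    linarith

lemma split_right (H : Linked a b f s p q) (hb0 : 0 ≤ b) (hb : 2 * b ≤ 1)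
    (hf : AntitoneOn (fun y => f y - M * y) s) (hgap : M * ((1 - 2 * b) * b ^ q) ≤ a ^ p) :
    Linked a b f s p (q + 1) := by
  obtain ⟨x, y, hx, hy, hs, hfy, hxf⟩ := H
  have hchild : 0 ≤ b ^ (q + 1) := pow_nonneg hb0 _
  have hgap0 : y + b ^ (q + 1) ≤ y + (1 - b) * b ^ q := by
    rw [pow_succ]
    linarith [mul_nonneg (sub_nonneg.2 hb) (pow_nonneg hb0 q)]
  have hend : y + (1 - b) * b ^ q + b ^ (q + 1) = y + b ^ q := by ring
  by_cases hleft : x ≤ f (y + b ^ (q + 1))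
  · exact ⟨x, y, hx, hy.left, (Icc_subset_Icc_right (by linarith)).trans hs, hfy, hleft⟩
  · have hlen : f (y + (1 - b) * b ^ q) - M * (y + (1 - b) * b ^ q) ≤
        f (y + b ^ (q + 1)) - M * (y + b ^ (q + 1)) :=
      hf (hs ⟨by linarith, by linarith⟩) (hs ⟨by linarith, by linarith⟩) hgap0
    refine ⟨x, _, hx, hy.right, ?_, ?_, by rwa [hend]⟩
    · rw [hend]
      exact (Icc_subset_Icc_left (by linarith)).trans hs
    · rw [pow_succ] at hlen hleft
      linarith

lemma split_left_golden (H : Linked (r ^ 3) (r ^ 2) f s p q) (hr : r ^ 2 = 1 - r) (hr0 : 0 < r)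
    (hf : MonotoneOn (fun y => f y - (1 + r ^ 2) * y) s) (hpq : 2 * q ≤ 3 * p + 2) :
    Linked (r ^ 3) (r ^ 2) f s (p + 1) q := by
  refine H.split_left (sq_nonneg r) hf ?_
  have hr1 : r ≤ 1 := by linarith [sq_nonneg r]
  calc (1 - 2 * r ^ 3) * (r ^ 3) ^ p = (1 + r ^ 2) * r ^ 2 * (r ^ 3) ^ p := by
        congr 1; linear_combination (-r ^ 2 - r - 1) * hr
    _ = (1 + r ^ 2) * r ^ (3 * p + 2) := by ring
    _ ≤ (1 + r ^ 2) * r ^ (2 * q) := by gcongr ?_ * ?_; exact pow_le_pow_of_le_one hr0.le hr1 hpq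
    _ = (1 + r ^ 2) * (r ^ 2) ^ q := by rw [pow_mul]

lemma split_right_golden (H : Linked (r ^ 3) (r ^ 2) f s p q) (hr : r ^ 2 = 1 - r) (hr0 : 0 < r)
    (hf : AntitoneOn (fun y => f y - (1 + r) * y) s) (hpq : 3 * p ≤ 2 * q + 2) :
    Linked (r ^ 3) (r ^ 2) f s p (q + 1) := by
  have hr1 : r ≤ 1 := by linarith [sq_nonneg r]
  refine H.split_right (sq_nonneg r) (by nlinarith) hf ?_
  calc (1 + r) * ((1 - 2 * r ^ 2) * (r ^ 2) ^ q) = r ^ 2 * (r ^ 2) ^ q := by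
        rw [← mul_assoc]; congr 1; linear_combination (-2 * r - 1) * hr
    _ = r ^ (2 * q + 2) := by ring
    _ ≤ r ^ (3 * p) := pow_le_pow_of_le_one hr0.le hr1 hpq
    _ = (r ^ 3) ^ p := pow_mul r 3 p

lemma exists_le_add_golden (H : Linked (r ^ 3) (r ^ 2) f s p q) (hr : r ^ 2 = 1 - r) (hr0 : 0 < r)
    (hmono : MonotoneOn (fun y => f y - (1 + r ^ 2) * y) s)
    (hanti : AntitoneOn (fun y => f y - (1 + r) * y) s)
    (hqp : 2 * q ≤ 3 * p + 2) (hpq : 3 * p ≤ 2 * q + 2) (n : ℕ) :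
    ∃ p' q', n ≤ p' + q' ∧ 2 * q' ≤ 3 * p' + 2 ∧ 3 * p' ≤ 2 * q' + 2 ∧
      Linked (r ^ 3) (r ^ 2) f s p' q' := by
  induction n with
  | zero => exact ⟨p, q, Nat.zero_le _, hqp, hpq, H⟩
  | succ n ih =>
    obtain ⟨p', q', hn, hqp', hpq', H'⟩ := ih
    by_cases hlonger : 3 * p' < 2 * q'
    · exact ⟨p' + 1, q', by lia, by lia, by lia, H'.split_left_golden hr hr0 hmono hqp'⟩
    · exact ⟨p', q' + 1, by lia, by lia, by lia, H'.split_right_golden hr hr0 hanti hpq'⟩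

end Linked

lemma inter_image_middleCantor_nonempty {a b : ℝ} {f : ℝ → ℝ} {s : Set ℝ}
    (ha0 : 0 ≤ a) (ha1 : a < 1) (hb0 : 0 ≤ b) (hb1 : b < 1) (hf : Continuous f)
    (H : ∀ n, ∃ p ≥ n, ∃ q ≥ n, Linked a b f s p q) :
    (middleCantor a ∩ f '' middleCantor b).Nonempty := by
  choose p hp q hq x y hx hy _ hfy hxf using H
  obtain ⟨⟨x₀, y₀⟩, ⟨hx₀, hy₀⟩, φ, hφ, hlim⟩ :=
    ((isCompact_middleCantor ha0 ha1).prod (isCompact_middleCantor hb0 hb1)).tendsto_subseq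
      (x := fun n => (x n, y n)) fun n => ⟨(hx n).mem_middleCantor, (hy n).mem_middleCantor⟩
  have hxlim : Tendsto (x ∘ φ) atTop (𝓝 x₀) := hlim.fst_nhds
  have hylim : Tendsto (y ∘ φ) atTop (𝓝 y₀) := hlim.snd_nhds
  have halim : Tendsto (fun n => a ^ p (φ n)) atTop (𝓝 0) :=
    (tendsto_pow_atTop_nhds_zero_of_lt_one ha0 ha1).comp
      ((tendsto_atTop_mono hp tendsto_id).comp hφ.tendsto_atTop)
  have hblim : Tendsto (fun n => b ^ q (φ n)) atTop (𝓝 0) :=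
    (tendsto_pow_atTop_nhds_zero_of_lt_one hb0 hb1).comp
      ((tendsto_atTop_mono hq tendsto_id).comp hφ.tendsto_atTop)
  have hle : f y₀ ≤ x₀ + 0 :=
    le_of_tendsto_of_tendsto' ((hf.tendsto y₀).comp hylim) (hxlim.add halim) fun n => hfy (φ n)
  have hge : x₀ ≤ f (y₀ + 0) :=
    le_of_tendsto_of_tendsto' hxlim ((hf.tendsto _).comp (hylim.add hblim)) fun n => hxf (φ n)
  rw [add_zero] at hle hge
  exact ⟨x₀, hx₀, y₀, hy₀, le_antisymm hle hge⟩

lemma Linked.inter_image_nonempty_golden {r : ℝ} {f : ℝ → ℝ} {s : Set ℝ} {p q : ℕ}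
    (H : Linked (r ^ 3) (r ^ 2) f s p q) (hr : r ^ 2 = 1 - r) (hr0 : 0 < r) (hf : Continuous f)
    (hmono : MonotoneOn (fun y => f y - (1 + r ^ 2) * y) s)
    (hanti : AntitoneOn (fun y => f y - (1 + r) * y) s)
    (hqp : 2 * q ≤ 3 * p + 2) (hpq : 3 * p ≤ 2 * q + 2) :
    (middleCantor (r ^ 3) ∩ f '' middleCantor (r ^ 2)).Nonempty := by
  have hr1 : r < 1 := by linarith [sq_pos_of_pos hr0]
  refine inter_image_middleCantor_nonempty (s := s) (by positivity)
    (pow_lt_one₀ hr0.le hr1 three_ne_zero) (by positivity) (pow_lt_one₀ hr0.le hr1 two_ne_zero)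
    hf fun n => ?_
  obtain ⟨p', q', hn, hqp', hpq', H'⟩ :=
    H.exists_le_add_golden hr hr0 hmono hanti hqp hpq (3 * n + 1)
  exact ⟨p', by lia, q', by lia, H'⟩

section AddSqrtSq

variable {t k c d : ℝ}

lemma add_sqrt_sq_sub_mul {y : ℝ} (hy : 0 ≤ y) :
    (t + √y) ^ 2 - (1 + k) * y = t ^ 2 + 2 * t * √y - k * √y ^ 2 := by
  linear_combination (1 + k) * Real.sq_sqrt hy

lemma monotoneOn_add_sqrt_sq_sub_mul (hk : 0 ≤ k) (hd : k * √d ≤ t) :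
    MonotoneOn (fun y => (t + √y) ^ 2 - (1 + k) * y) (Icc 0 d) := by
  intro y hy y' hy' hyy'
  have hsqrt : √y ≤ √y' := Real.sqrt_le_sqrt hyy'
  have hyd : k * √y ≤ k * √d := mul_le_mul_of_nonneg_left (Real.sqrt_le_sqrt hy.2) hk
  have hyd' : k * √y' ≤ k * √d := mul_le_mul_of_nonneg_left (Real.sqrt_le_sqrt hy'.2) hk
  simp only [add_sqrt_sq_sub_mul hy.1, add_sqrt_sq_sub_mul hy'.1]
  have hfactor : 0 ≤ (√y' - √y) * (2 * t - k * (√y + √y')) :=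
    mul_nonneg (by linarith) (by linarith)
  linarith

lemma antitoneOn_add_sqrt_sq_sub_mul (hk : 0 ≤ k) (hc0 : 0 ≤ c) (hc : t ≤ k * √c) :
    AntitoneOn (fun y => (t + √y) ^ 2 - (1 + k) * y) (Ici c) := by
  intro y hy y' hy' hyy'
  have hsqrt : √y ≤ √y' := Real.sqrt_le_sqrt hyy'
  have hcy : k * √c ≤ k * √y := mul_le_mul_of_nonneg_left (Real.sqrt_le_sqrt hy) hk
  have hcy' : k * √c ≤ k * √y' := mul_le_mul_of_nonneg_left (Real.sqrt_le_sqrt hy') hk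
  simp only [add_sqrt_sq_sub_mul (hc0.trans hy), add_sqrt_sq_sub_mul (hc0.trans hy')]
  have hfactor : 0 ≤ (√y' - √y) * (k * (√y + √y') - 2 * t) :=
    mul_nonneg (by linarith) (by linarith)
  linarith

end AddSqrtSq

section Golden

variable {r t : ℝ}

lemma linked_add_sqrt_sq_golden (hr : r ^ 2 = 1 - r) (hr0 : 0 < r) (ht0 : 0 ≤ t) (ht1 : t ≤ r ^ 2)
    (ht : 1 - r ^ 3 ≤ (t + r) ^ 2) :
    Linked (r ^ 3) (r ^ 2) (fun y => (t + √y) ^ 2) (Icc (r ^ 3) (r ^ 2)) 1 2 := by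
  have hr1 : r ≤ 1 := by linarith [sq_nonneg r]
  have hleft : 0 + (1 - r ^ 2) * (r ^ 2) ^ 1 = r ^ 3 := by linear_combination (-r ^ 2) * hr
  have hright : r ^ 3 + (r ^ 2) ^ 2 = r ^ 2 := by linear_combination r ^ 2 * hr
  have hsqrt : √(r ^ 3) ≤ r :=
    Real.sqrt_le_iff.2 ⟨hr0.le, pow_le_pow_of_le_one hr0.le hr1 (by norm_num)⟩
  refine ⟨_, r ^ 3, (IsLeftEndpoint.zero _).right, hleft ▸ (IsLeftEndpoint.zero _).left.right,
    by rw [hright], ?_, ?_⟩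
  · calc (t + √(r ^ 3)) ^ 2 ≤ 1 :=
          pow_le_one₀ (add_nonneg ht0 (Real.sqrt_nonneg _)) (by linarith)
      _ = 0 + (1 - r ^ 3) * (r ^ 3) ^ 0 + (r ^ 3) ^ 1 := by ring
  · simpa only [hright, Real.sqrt_sq hr0.le, zero_add, pow_zero, mul_one] using ht

lemma exists_eq_sqrt_sub_sqrt_golden (hr : r ^ 2 = 1 - r) (hr0 : 0 < r) (ht0 : r ^ 3 ≤ t)
    (ht1 : t ≤ r * √(r ^ 3)) (ht : 1 - r ^ 3 ≤ (t + r) ^ 2) :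
    ∃ x ∈ middleCantor (r ^ 3), ∃ y ∈ middleCantor (r ^ 2), t = √x - √y := by
  have ht_nonneg : 0 ≤ t := (pow_nonneg hr0.le 3).trans ht0
  have hr1 : r ≤ 1 := by linarith [sq_nonneg r]
  have ht_le : t ≤ r ^ 2 :=
    calc t ≤ r * √(r ^ 3) := ht1
      _ ≤ r * √(r ^ 2) := by gcongr ?_ * √?_; exact pow_le_pow_of_le_one hr0.le hr1 (by norm_num)
      _ = r ^ 2 := by rw [Real.sqrt_sq hr0.le, sq]
  have hmono : MonotoneOn (fun y => (t + √y) ^ 2 - (1 + r ^ 2) * y) (Icc (r ^ 3) (r ^ 2)) :=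
    (monotoneOn_add_sqrt_sq_sub_mul (sq_nonneg r)
      (by rwa [Real.sqrt_sq hr0.le, ← pow_succ])).mono (Icc_subset_Icc_left (by positivity))
  have hanti : AntitoneOn (fun y => (t + √y) ^ 2 - (1 + r) * y) (Icc (r ^ 3) (r ^ 2)) :=
    (antitoneOn_add_sqrt_sq_sub_mul hr0.le (by positivity) ht1).mono Icc_subset_Ici_self
  obtain ⟨_, hx, y, hy, rfl⟩ :=
    (linked_add_sqrt_sq_golden hr hr0 ht_nonneg ht_le ht).inter_image_nonempty_golden hr hr0
      (by fun_prop) hmono hanti (by norm_num) (by norm_num)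
  refine ⟨_, hx, y, hy, ?_⟩
  rw [Real.sqrt_sq (add_nonneg ht_nonneg (Real.sqrt_nonneg y)), add_sub_cancel_right]

lemma exists_eq_sqrt_sub_sqrt_of_mem_Ioo (hr : r ^ 2 = 1 - r) (hr0 : 0 < r)
    (ht : t ∈ Ioo 0.26 0.3) :
    ∃ x ∈ middleCantor (r ^ 3), ∃ y ∈ middleCantor (r ^ 2), t = √x - √y := by
  obtain ⟨hlower, hupper⟩ := ht
  have hr3 : r ^ 3 = 2 * r - 1 := by linear_combination (r - 1) * hr
  have hr5 : r ^ 5 = 5 * r - 3 := by linear_combination r ^ 2 * hr3 + (2 * r - 3) * hr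
  have hr_lower : 0.618 ≤ r := by nlinarith
  have hr_upper : r ≤ 0.63 := by nlinarith
  have hsqrt : t / r ≤ √(r ^ 3) := by
    refine Real.le_sqrt_of_sq_le ?_
    rw [div_pow, div_le_iff₀ (by positivity)]
    calc t ^ 2 ≤ 0.3 ^ 2 := by gcongr
      _ ≤ r ^ 5 := by linarith
      _ = r ^ 3 * r ^ 2 := by ring
  have hstart : 1 - r ^ 3 ≤ (t + r) ^ 2 :=
    calc 1 - r ^ 3 ≤ (0.26 + 0.618) ^ 2 := by linarith
      _ ≤ (t + r) ^ 2 := by gcongr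
  exact exists_eq_sqrt_sub_sqrt_golden hr hr0 (by linarith) ((div_le_iff₀' hr0).1 hsqrt) hstart

end Golden

lemma inv_goldenRatio_sq : Real.goldenRatio⁻¹ ^ 2 = 1 - Real.goldenRatio⁻¹ := by
  rw [Real.inv_goldenRatio]
  linear_combination Real.goldenConj_sq

theorem stmt17 (γ : ℝ) (hγ : γ = (1 + Real.sqrt 5) / 2) :
    ∃ u v : ℝ, u < v ∧ Set.Ioo u v ⊆
      {z : ℝ | ∃ x ∈ middleCantor (γ ^ (-3 : ℤ)), ∃ y ∈ middleCantor (γ ^ (-2 : ℤ)),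
        z = Real.sqrt x - Real.sqrt y} := by
  obtain rfl : γ = Real.goldenRatio := hγ
  have hα : Real.goldenRatio ^ (-3 : ℤ) = Real.goldenRatio⁻¹ ^ 3 := by
    rw [inv_pow, zpow_neg, zpow_ofNat]
  have hβ : Real.goldenRatio ^ (-2 : ℤ) = Real.goldenRatio⁻¹ ^ 2 := by
    rw [inv_pow, zpow_neg, zpow_ofNat]
  rw [hα, hβ]
  exact ⟨0.26, 0.3, by norm_num, fun t ht =>
    exists_eq_sqrt_sub_sqrt_of_mem_Ioo inv_goldenRatio_sq (inv_pos.2 Real.goldenRatio_pos) ht⟩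
end
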